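/- arXiv:2509.06152 — 2 statements merged into one kernel-verified Lean document; each statement's English description precedes it below -/
import Mathlib

section
/- For m ∈ ℤ[ω] with m ≡ 1 (mod 3), Σ over ℓ ≡ 1 (mod 3) with gcd(ℓ,m)=1 of μ(ℓ)/N(ℓ)² equals (9/(8·ζ_{ℚ(ω)}(2)))·∏_{π ≡ 1 (mod 3), π | m} (1 − N(π)^{−2})^{−1}. -/
open Complex

noncomputable section

/-- The primitive cube root of unity `ω = e^{2πi/3}`. -/
def ω : ℂ := Complex.exp (2 * Real.pi * Complex.I / 3)

/-- The ring of Eisenstein integers `ℤ[ω]`, as a subring of `ℂ`. -/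
def Zω : Subring ℂ := Subring.closure {ω}

/-- `ω` as an element of `ℤ[ω]`. -/
def ωZ : Zω := ⟨ω, Subring.subset_closure rfl⟩

/-- The ramified prime `λ = 1 - ω` of `ℤ[ω]`. -/
def lamZ : Zω := 1 - ωZ

/-- The norm `N(a) = |a|²` from `ℚ(ω)` to `ℚ`, restricted to `ℤ[ω]`. -/
def Nm (a : Zω) : ℝ := Complex.normSq (a : ℂ)

/-- The norm of an Eisenstein integer, as a natural number. -/
def NmNat (a : Zω) : ℕ := ⌊Complex.normSq (a : ℂ)⌋₊

/-- `e(z) = e^{2πi Tr(z)} = e^{2πi (z + z̄)}`. -/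
def eE (z : ℂ) : ℂ := Complex.exp (2 * Real.pi * Complex.I * (z + (starRingEnd ℂ) z))

/-- `χ` is the cubic residue symbol `χ a b = (a/b)₃` on `ℤ[ω]`:
it is multiplicative in both arguments, and at prime moduli `π` coprime to `3`
it is given by the power-residue congruence
`(a/π)₃ ≡ a^{(N(π)-1)/3} (mod π)`, with values among `{1, ω, ω²}` (and `0` when `π ∣ a`). -/
def IsCubicSymbol (χ : Zω → Zω → Zω) : Prop :=
  (∀ a b₁ b₂ : Zω, χ a (b₁ * b₂) = χ a b₁ * χ a b₂) ∧
  (∀ a₁ a₂ b : Zω, χ (a₁ * a₂) b = χ a₁ b * χ a₂ b) ∧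
  (∀ a : Zω, χ a 1 = 1) ∧
  (∀ a π : Zω, Prime π → IsCoprime π 3 →
    (π ∣ a → χ a π = 0) ∧
    (¬ π ∣ a →
      ((χ a π : ℂ) = 1 ∨ (χ a π : ℂ) = ω ∨ (χ a π : ℂ) = ω ^ 2) ∧
      π ∣ (a ^ ((NmNat π - 1) / 3) - χ a π)))

/-- The shifted cubic Gauss sum `g(ν,c) = Σ_{d mod c} (d/c)₃ e(νd/c)`,
relative to a cubic residue symbol `χ`. -/
def gauss (χ : Zω → Zω → Zω) (ν c : Zω) : ℂ :=
  ∑' q : Zω ⧸ Ideal.span {c},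
    ((χ (Quotient.out q) c : Zω) : ℂ) * eE (((ν * Quotient.out q : Zω) : ℂ) / (c : ℂ))

/-- `μ` is the Möbius function of `ℤ[ω]`. -/
def IsMoebiusZω (μ : Zω → ℤ) : Prop :=
  μ 1 = 1 ∧
  (∀ a : Zω, ¬ Squarefree a → μ a = 0) ∧
  (∀ a b : Zω, IsCoprime a b → μ (a * b) = μ a * μ b) ∧
  (∀ π : Zω, Prime π → μ π = -1)

end

lemma omega_re : ω.re = -1/2 := by
  have h : (2 * Real.pi * Complex.I / 3 : ℂ) = ((Real.pi - Real.pi/3 : ℝ) : ℂ) * Complex.I := by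
    push_cast; ring
  rw [ω, h, Complex.exp_ofReal_mul_I_re, Real.cos_pi_sub, Real.cos_pi_div_three]; norm_num

lemma omega_im : ω.im = √3/2 := by
  have h : (2 * Real.pi * Complex.I / 3 : ℂ) = ((Real.pi - Real.pi/3 : ℝ) : ℂ) * Complex.I := by
    push_cast; ring
  rw [ω, h, Complex.exp_ofReal_mul_I_im, Real.sin_pi_sub, Real.sin_pi_div_three]

lemma omega_sq : ω ^ 2 = -1 - ω := by
  have h3 : √3 * √3 = 3 := Real.mul_self_sqrt (by norm_num)
  apply Complex.ext
  · simp [pow_two, omega_re, omega_im]; nlinarith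
  · simp [pow_two, omega_re, omega_im]; ring

lemma omegaZ_sq : ωZ ^ 2 = -1 - ωZ := by
  apply Subtype.ext; simpa [ωZ] using omega_sq

/-- The element `x + y ω`. -/
noncomputable def mkZ (x y : ℤ) : Zω := (x : Zω) + (y : Zω) * ωZ

lemma mkZ_coe (x y : ℤ) : ((mkZ x y : Zω) : ℂ) = x + y * ω := by
  simp [mkZ, ωZ]

lemma exists_coord (a : Zω) : ∃ x y : ℤ, a = mkZ x y := by
  obtain ⟨a, ha⟩ := a
  have : ∃ x y : ℤ, a = x + y * ω := by
    refine Subring.closure_induction (p := fun a _ => ∃ x y : ℤ, a = x + y * ω) ?_ ?_ ?_ ?_ ?_ ?_ ha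
    · rintro x hx
      rw [Set.mem_singleton_iff] at hx
      exact ⟨0, 1, by simp [hx]⟩
    · exact ⟨0, 0, by simp⟩
    · exact ⟨1, 0, by simp⟩
    · rintro _ _ _ _ ⟨x, y, rfl⟩ ⟨z, w, rfl⟩
      exact ⟨x + z, y + w, by push_cast; ring⟩
    · rintro _ _ ⟨x, y, rfl⟩
      exact ⟨-x, -y, by push_cast; ring⟩
    · rintro _ _ _ _ ⟨x, y, rfl⟩ ⟨z, w, rfl⟩
      refine ⟨x * z - y * w, x * w + y * z - y * w, ?_⟩
      push_cast
      linear_combination (y * w : ℂ) * omega_sq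
  obtain ⟨x, y, h⟩ := this
  exact ⟨x, y, Subtype.ext (by rw [mkZ_coe]; exact h)⟩

lemma mkZ_mul (x y z w : ℤ) :
    mkZ x y * mkZ z w = mkZ (x * z - y * w) (x * w + y * z - y * w) := by
  simp only [mkZ]; push_cast
  linear_combination (y * w : Zω) * omegaZ_sq

lemma normSq_coord (x y : ℝ) : Complex.normSq (x + y * ω) = x ^ 2 - x * y + y ^ 2 := by
  have h3 : √3 * √3 = 3 := Real.mul_self_sqrt (by norm_num)
  simp [Complex.normSq_apply, omega_re, omega_im]
  linear_combination (y ^ 2 / 4) * h3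

lemma Nm_mkZ (x y : ℤ) : Nm (mkZ x y) = ((x ^ 2 - x * y + y ^ 2 : ℤ) : ℝ) := by
  have := normSq_coord x y
  rw [Nm, mkZ_coe]; push_cast at *; exact this

lemma mkZ_inj {x y z w : ℤ} (h : mkZ x y = mkZ z w) : x = z ∧ y = w := by
  have h3 : √3 ≠ 0 := by positivity
  have h' : ((mkZ x y : Zω) : ℂ) = (mkZ z w : Zω) := by rw [h]
  rw [mkZ_coe, mkZ_coe] at h'
  have h1 := congrArg Complex.im h'
  have h2 := congrArg Complex.re h'
  simp [omega_re, omega_im] at h1 h2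
  subst h1
  simpa using h2

lemma Nm_mul (a b : Zω) : Nm (a * b) = Nm a * Nm b := by simp [Nm]

lemma Nm_one : Nm 1 = 1 := by simp [Nm]

lemma Nm_eq_zero {a : Zω} : Nm a = 0 ↔ a = 0 := by simp [Nm, Complex.normSq_eq_zero]

lemma Nm_nonneg (a : Zω) : 0 ≤ Nm a := Complex.normSq_nonneg _

lemma Nm_nat (a : Zω) : ∃ n : ℕ, Nm a = n := by
  obtain ⟨x, y, rfl⟩ := exists_coord a
  have h : 0 ≤ x ^ 2 - x * y + y ^ 2 := by nlinarith [sq_nonneg (x - y), sq_nonneg (x + y)]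
  refine ⟨(x ^ 2 - x * y + y ^ 2).toNat, ?_⟩
  rw [Nm_mkZ]
  have := Int.toNat_of_nonneg h
  exact_mod_cast this.symm

lemma Nm_one_le {a : Zω} (h : a ≠ 0) : 1 ≤ Nm a := by
  obtain ⟨n, hn⟩ := Nm_nat a
  have h0 : Nm a ≠ 0 := fun h' => h (Nm_eq_zero.1 h')
  rw [hn] at h0 ⊢
  have : n ≠ 0 := by exact_mod_cast h0
  exact_mod_cast Nat.one_le_iff_ne_zero.2 this

lemma exists_near (z : ℂ) : ∃ q : Zω, Complex.normSq (z - q) < 1 := by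
  have h3 : √3 ≠ 0 := by positivity
  have hz : ∃ x y : ℝ, z = x + y * ω := by
    refine ⟨z.re + z.im / √3, 2 * z.im / √3, ?_⟩
    apply Complex.ext
    · simp [omega_re, omega_im]; ring
    · simp [omega_re, omega_im]; field_simp
  obtain ⟨x, y, rfl⟩ := hz
  refine ⟨mkZ (round x) (round y), ?_⟩
  rw [mkZ_coe]
  have : (x + y * ω - ((round x : ℤ) + (round y : ℤ) * ω) : ℂ)
      = ((x - round x : ℝ) : ℂ) + ((y - round y : ℝ) : ℂ) * ω := by push_cast; ring
  rw [this, normSq_coord]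
  have h1 := abs_le.1 (abs_sub_round x)
  have h2 := abs_le.1 (abs_sub_round y)
  set s := x - round x
  set t := y - round y
  nlinarith [mul_nonneg (sub_nonneg.2 h1.1) (sub_nonneg.2 h1.2), mul_nonneg (sub_nonneg.2 h2.1) (sub_nonneg.2 h2.2), sq_nonneg (s + t), mul_self_nonneg s]

instance pidZω : IsPrincipalIdealRing Zω := by
  refine ⟨fun I => ?_⟩
  by_cases hI : I = ⊥
  · subst hI; exact ⟨⟨0, by simp⟩⟩
  obtain ⟨b, hb, hb0⟩ := Submodule.exists_mem_ne_zero_of_ne_bot hI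
  choose n hn using Nm_nat
  obtain ⟨a, ⟨ha, ha0⟩, hmin⟩ := (measure n).wf.has_min {a : Zω | a ∈ I ∧ a ≠ 0} ⟨b, hb, hb0⟩
  refine ⟨⟨a, le_antisymm ?_ ?_⟩⟩
  · intro c hc
    obtain ⟨q, hq⟩ := exists_near ((c : ℂ) / (a : ℂ))
    have hac : (a : ℂ) ≠ 0 := by simpa using ha0
    have hr : c - q * a ∈ I := I.sub_mem hc (I.mul_mem_left _ ha)
    have hlt : Nm (c - q * a) < Nm a := by
      have : ((c - q * a : Zω) : ℂ) = ((c : ℂ) / a - q) * a := by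
        push_cast; field_simp
      rw [Nm, this, map_mul]
      have h1 : 0 < Nm a := lt_of_lt_of_le one_pos (Nm_one_le ha0)
      unfold Nm at *
      nlinarith
    by_contra hcon
    have hne : c - q * a ≠ 0 := by
      intro h0
      apply hcon
      rw [sub_eq_zero] at h0
      rw [h0]
      exact Ideal.mul_mem_left _ _ (Ideal.mem_span_singleton_self a)
    apply hmin _ ⟨hr, hne⟩
    rw [hn, hn] at hlt
    exact_mod_cast hlt
  · exact (Ideal.span_singleton_le_iff_mem I).2 ha

/-- Coordinates. -/
noncomputable def coordEquiv : (Fin 2 → ℤ) ≃ₗ[ℤ] Zω :=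
  LinearEquiv.ofBijective
    { toFun := fun v => mkZ (v 0) (v 1)
      map_add' := by intro v w; simp [mkZ]; ring
      map_smul' := by intro c v; simp [mkZ]; ring }
    ⟨by
      intro v w h
      have := mkZ_inj h
      ext i; fin_cases i
      · exact this.1
      · exact this.2,
     by
      intro a
      obtain ⟨x, y, rfl⟩ := exists_coord a
      exact ⟨![x, y], rfl⟩⟩

lemma coordEquiv_apply (v : Fin 2 → ℤ) : coordEquiv v = mkZ (v 0) (v 1) := rfl

/-- The integral basis. -/
noncomputable def basZ : Module.Basis (Fin 2) ℤ Zω := Module.Basis.ofEquivFun coordEquiv.symm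

lemma norm_mkZ (x y : ℤ) : Algebra.norm ℤ (mkZ x y) = x ^ 2 - x * y + y ^ 2 := by
  have e0 : basZ 0 = mkZ 1 0 := by simp [basZ, coordEquiv_apply]
  have e1 : basZ 1 = mkZ 0 1 := by simp [basZ, coordEquiv_apply]
  have er : ∀ z w : ℤ, ∀ i, basZ.repr (mkZ z w) i = ![z, w] i := by
    intro z w i
    have : mkZ z w = coordEquiv ![z, w] := rfl
    rw [this]
    simp [basZ]
  rw [Algebra.norm_eq_matrix_det basZ, Matrix.det_fin_two]
  simp only [Algebra.leftMulMatrix_eq_repr_mul, e0, e1, mkZ_mul, er]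
  simp
  ring

instance : Module.Free ℤ Zω := Module.Free.of_basis basZ
instance : Module.Finite ℤ Zω := Module.Finite.of_basis basZ

lemma card_span (a : Zω) : (Nat.card (Zω ⧸ Ideal.span {a}) : ℝ) = Nm a := by
  have h := Ideal.absNorm_span_singleton a
  rw [Ideal.absNorm_apply, Submodule.cardQuot_apply] at h
  obtain ⟨x, y, rfl⟩ := exists_coord a
  have hnn : 0 ≤ x ^ 2 - x * y + y ^ 2 := by nlinarith [sq_nonneg (x - y), sq_nonneg (x + y)]
  have h2 : (Nat.card (Zω ⧸ Ideal.span {mkZ x y}) : ℤ) = x ^ 2 - x * y + y ^ 2 := by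
    have := h
    rw [norm_mkZ] at this
    rw [← Int.natAbs_of_nonneg hnn]
    exact_mod_cast this
  rw [Nm_mkZ, ← h2]; simp


lemma lamZ_eq : lamZ = mkZ 1 (-1) := by
  simp [lamZ, mkZ]; ring

lemma lam_dvd_mkZ (x y : ℤ) : lamZ ∣ mkZ x y ↔ 3 ∣ x + y := by
  rw [lamZ_eq]
  constructor
  · rintro ⟨c, hc⟩
    obtain ⟨z, w, rfl⟩ := exists_coord c
    rw [mkZ_mul] at hc
    obtain ⟨h1, h2⟩ := mkZ_inj hc
    exact ⟨w, by rw [h1, h2]; ring⟩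
  · rintro ⟨w, hw⟩
    refine ⟨mkZ (x - w) w, ?_⟩
    rw [mkZ_mul]
    have : y = 3 * w - x := by linarith
    subst this
    congr 1 <;> ring

lemma three_dvd_mkZ (x y : ℤ) : (3 : Zω) ∣ mkZ x y ↔ 3 ∣ x ∧ 3 ∣ y := by
  have h3 : (3 : Zω) = mkZ 3 0 := by simp [mkZ]
  rw [h3]
  constructor
  · rintro ⟨c, hc⟩
    obtain ⟨z, w, rfl⟩ := exists_coord c
    rw [mkZ_mul] at hc
    obtain ⟨h1, h2⟩ := mkZ_inj hc
    exact ⟨⟨z, by rw [h1]; ring⟩, ⟨w, by rw [h2]; ring⟩⟩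
  · rintro ⟨⟨z, rfl⟩, ⟨w, rfl⟩⟩
    refine ⟨mkZ z w, ?_⟩
    rw [mkZ_mul]
    congr 1 <;> ring

lemma primary_mkZ (x y : ℤ) : (3 : Zω) ∣ mkZ x y - 1 ↔ 3 ∣ x - 1 ∧ 3 ∣ y := by
  rw [← three_dvd_mkZ]
  have : mkZ x y - 1 = mkZ (x - 1) y := by simp [mkZ]; ring
  rw [this]

lemma exists_primary {a : Zω} (ha : ¬ lamZ ∣ a) : ∃ u : Zω, IsUnit u ∧ (3 : Zω) ∣ u * a - 1 := by
  obtain ⟨x, y, rfl⟩ := exists_coord a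
  rw [lam_dvd_mkZ] at ha
  have key : ∀ z w z' w' : ℤ, z * z' - w * w' = 1 → z * w' + w * z' - w * w' = 0 →
      3 ∣ (z * x - w * y) - 1 → 3 ∣ z * y + w * x - w * y →
      ∃ u : Zω, IsUnit u ∧ (3 : Zω) ∣ u * mkZ x y - 1 := by
    intro z w z' w' h1 h2 h3 h4
    refine ⟨mkZ z w, ?_, ?_⟩
    · apply IsUnit.of_mul_eq_one (mkZ z' w')
      rw [mkZ_mul, h1, h2]; simp [mkZ]
    · rw [mkZ_mul, primary_mkZ]; exact ⟨h3, h4⟩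
  have hx : x % 3 = 0 ∨ x % 3 = 1 ∨ x % 3 = 2 := by omega
  have hy : y % 3 = 0 ∨ y % 3 = 1 ∨ y % 3 = 2 := by omega
  rcases hx with hx | hx | hx <;> rcases hy with hy | hy | hy
  · omega
  · exact key (-1) (-1) 0 1 (by norm_num) (by norm_num) (by omega) (by omega)
  · exact key 1 1 0 (-1) (by norm_num) (by norm_num) (by omega) (by omega)
  · exact key 1 0 1 0 (by norm_num) (by norm_num) (by omega) (by omega)
  · exact key 0 (-1) 1 1 (by norm_num) (by norm_num) (by omega) (by omega)
  · omega
  · exact key (-1) 0 (-1) 0 (by norm_num) (by norm_num) (by omega) (by omega)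
  · omega
  · exact key 0 1 (-1) (-1) (by norm_num) (by norm_num) (by omega) (by omega)

lemma Nm_unit {u : Zω} (hu : IsUnit u) : Nm u = 1 := by
  obtain ⟨v, hv⟩ := hu.exists_right_inv
  have h := Nm_mul u v
  rw [hv, Nm_one] at h
  have h1 : 1 ≤ Nm u := Nm_one_le hu.ne_zero
  have h2 : 1 ≤ Nm v := Nm_one_le (by rintro rfl; simp at hv)
  nlinarith

lemma primary_unit {u : Zω} (hu : IsUnit u) (h : (3 : Zω) ∣ u - 1) : u = 1 := by
  have hn := Nm_unit hu
  obtain ⟨x, y, rfl⟩ := exists_coord u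
  rw [primary_mkZ] at h
  rw [Nm_mkZ] at hn
  have hn' : x ^ 2 - x * y + y ^ 2 = 1 := by exact_mod_cast hn
  obtain ⟨⟨z, hz⟩, ⟨w, rfl⟩⟩ := h
  have hw : w = 0 := by
    by_contra hw
    have : 1 ≤ w ^ 2 := by have := sq_pos_of_ne_zero hw; linarith
    nlinarith [sq_nonneg (2 * x - 3 * w)]
  subst hw
  have hx : x = 1 := by
    have : (x - 1) * (x + 1) = 0 := by linarith
    rcases mul_eq_zero.1 this with h | h <;> omega
  subst hx
  simp [mkZ]

lemma primary_mul_iff {q k : Zω} (hq : (3 : Zω) ∣ q - 1) :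
    (3 : Zω) ∣ q * k - 1 ↔ (3 : Zω) ∣ k - 1 := by
  have : q * k - 1 = (q - 1) * k + (k - 1) := by ring
  rw [this, dvd_add_right (hq.mul_right k)]

lemma primary_assoc {a b : Zω} (h : Associated a b) (ha : (3 : Zω) ∣ a - 1)
    (hb : (3 : Zω) ∣ b - 1) : a = b := by
  obtain ⟨u, rfl⟩ := h
  rw [primary_mul_iff ha] at hb
  rw [primary_unit u.isUnit hb, mul_one]

lemma primary_not_lam {a : Zω} (ha : (3 : Zω) ∣ a - 1) : ¬ lamZ ∣ a := by
  obtain ⟨x, y, rfl⟩ := exists_coord a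
  rw [primary_mkZ] at ha
  rw [lam_dvd_mkZ]
  omega

lemma lam_not_unit : ¬ IsUnit lamZ := fun h =>
  primary_not_lam (a := 1) (by simp) h.dvd

lemma Nm_lam : Nm lamZ = 3 := by
  rw [lamZ_eq, Nm_mkZ]; norm_num

lemma primary_ne_zero {a : Zω} (ha : (3 : Zω) ∣ a - 1) : a ≠ 0 := by
  rintro rfl
  exact primary_not_lam ha (dvd_zero _)

/-- `h a = N(a)^{-2}`. -/
noncomputable def hN (a : Zω) : ℂ := ((Nm a : ℂ) ^ 2)⁻¹

lemma hN_mul (a b : Zω) : hN (a * b) = hN a * hN b := by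
  simp [hN, Nm_mul, mul_pow, mul_comm]

lemma hN_one : hN 1 = 1 := by simp [hN, Nm_one]

lemma norm_hN (a : Zω) : ‖hN a‖ = (Nm a ^ 2)⁻¹ := by
  simp [hN, abs_of_nonneg (Nm_nonneg a)]

lemma summable_hN : Summable hN := by
  rw [← coordEquiv.toEquiv.summable_iff]
  have hs := (EisensteinSeries.summable_one_div_norm_rpow (k := 4) (by norm_num)).mul_left (16/9)
  refine Summable.of_norm_bounded hs ?_
  intro v
  have e : (hN ∘ coordEquiv.toEquiv) v = hN (mkZ (v 0) (v 1)) := rfl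
  rw [e, norm_hN, Nm_mkZ]
  by_cases hv : v = 0
  · subst hv
    simp
  have hpos : 0 < ‖v‖ := norm_pos_iff.2 hv
  have h4 : ‖v‖ ^ (-4 : ℝ) = (‖v‖ ^ 4)⁻¹ := by
    rw [Real.rpow_neg hpos.le]; norm_cast
  have hb : 3 / 4 * ‖v‖ ^ 2 ≤ ((v 0 ^ 2 - v 0 * v 1 + v 1 ^ 2 : ℤ) : ℝ) := by
    have hc : ‖v‖ = ‖v 0‖ ∨ ‖v‖ = ‖v 1‖ := by
      have h := EisensteinSeries.norm_eq_max_natAbs v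
      rw [h, Int.norm_eq_abs, Int.norm_eq_abs, ← Int.cast_abs, ← Int.cast_abs,
        Int.abs_eq_natAbs, Int.abs_eq_natAbs]
      rcases max_choice (v 0).natAbs (v 1).natAbs with h | h <;> rw [h]
      · exact Or.inl (by rw [Nat.cast_natAbs, Int.abs_eq_natAbs])
      · exact Or.inr (by rw [Nat.cast_natAbs, Int.abs_eq_natAbs])
    push_cast
    rcases hc with hc | hc <;> rw [hc, Int.norm_eq_abs, sq_abs]
    · nlinarith [sq_nonneg ((v 0 : ℝ) - 2 * v 1)]
    · nlinarith [sq_nonneg ((v 1 : ℝ) - 2 * v 0)]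
  rw [h4]
  have : (16 / 9 * (‖v‖ ^ 4)⁻¹ : ℝ) = ((3 / 4 * ‖v‖ ^ 2) ^ 2)⁻¹ := by
    field_simp; norm_num
  rw [this]
  gcongr


/-- Primary primes. -/
abbrev PP : Type := {q : Zω // Prime q ∧ (3 : Zω) ∣ (q - 1)}

/-- Primary elements not divisible by the primes in `P`. -/
def TT (P : Finset PP) : Set Zω := {l | (3 : Zω) ∣ l - 1 ∧ ∀ q ∈ P, ¬ q.1 ∣ l}

open Classical in
lemma tsum_TT_insert {P : Finset PP} {q : PP} (hq : q ∉ P) {F : Zω → ℂ} (hF : Summable F) :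
    ∑' l : TT P, F l = ∑' l : TT (insert q P), F l + ∑' l : TT P, F (q.1 * l) := by
  have hmem : ∀ k, k ∈ TT P → q.1 * k ∈ TT P := by
    rintro k ⟨hk, hk'⟩
    refine ⟨(primary_mul_iff q.2.2).2 hk, fun p hp hdvd => ?_⟩
    rcases p.2.1.dvd_or_dvd hdvd with h | h
    · apply hq
      have : p = q := Subtype.ext
        (primary_assoc ((p.2.1.dvd_prime_iff_associated q.2.1).1 h) p.2.2 q.2.2)
      rwa [← this]
    · exact hk' p hp h
  have hsub : ∀ k, k ∈ TT (insert q P) → k ∈ TT P := fun k hk =>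
    ⟨hk.1, fun p hp => hk.2 p (Finset.mem_insert_of_mem hp)⟩
  let φ : (TT (insert q P)) ⊕ (TT P) → TT P :=
    Sum.elim (fun k => ⟨k.1, hsub _ k.2⟩) (fun k => ⟨q.1 * k.1, hmem _ k.2⟩)
  have hφ : Function.Bijective φ := by
    constructor
    · rintro (⟨a, ha⟩ | ⟨a, ha⟩) (⟨b, hb⟩ | ⟨b, hb⟩) h <;> simp [φ] at h
      · simp [h]
      · exact absurd (Dvd.intro _ h.symm) (ha.2 q (Finset.mem_insert_self _ _))
      · exact absurd (Dvd.intro _ h) (hb.2 q (Finset.mem_insert_self _ _))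
      · rcases h with h | h
        · simp [h]
        · exact absurd h q.2.1.ne_zero
    · rintro ⟨a, ha⟩
      by_cases hd : q.1 ∣ a
      · obtain ⟨k, rfl⟩ := hd
        refine ⟨Sum.inr ⟨k, (primary_mul_iff q.2.2).1 ha.1, fun p hp h => ?_⟩, rfl⟩
        exact ha.2 p hp (h.mul_left _)
      · refine ⟨Sum.inl ⟨a, ha.1, fun p hp => ?_⟩, rfl⟩
        rcases Finset.mem_insert.1 hp with rfl | hp
        · exact hd
        · exact ha.2 p hp
  rw [← (Equiv.ofBijective φ hφ).tsum_eq]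
  have hs : Summable fun x => F ((Equiv.ofBijective φ hφ x : TT P) : Zω) :=
    ((hF.subtype (TT P)).comp_injective (Equiv.ofBijective φ hφ).injective)
  exact Summable.tsum_sum (f := fun x => F ((Equiv.ofBijective φ hφ x : TT P) : Zω))
    (hs.comp_injective Sum.inl_injective) (hs.comp_injective Sum.inr_injective)

lemma exists_PP {l : Zω} (hl : (3 : Zω) ∣ l - 1) {z : Zω} (hz : Prime z) (hzl : z ∣ l) :
    ∃ q : PP, Associated q.1 z := by
  have : ¬ lamZ ∣ z := fun h => primary_not_lam hl (h.trans hzl)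
  obtain ⟨u, hu, h⟩ := exists_primary this
  have ha : Associated (u * z) z := associated_unit_mul_left z u hu
  exact ⟨⟨u * z, ha.symm.prime hz, h⟩, ha⟩

lemma tendsto_TT {F : Zω → ℂ} (hF : Summable F) :
    Filter.Tendsto (fun P : Finset PP => ∑' l : TT P, F l) Filter.atTop (nhds (F 1)) := by
  have h1 : F 1 = ∑' l : Zω, ({1} : Set Zω).indicator F l := by
    rw [← tsum_subtype, tsum_singleton]
  rw [h1]
  simp_rw [tsum_subtype]
  refine tendsto_tsum_of_dominated_convergence (bound := fun l => ‖F l‖) hF.norm ?_ ?_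
  · intro l
    apply tendsto_const_nhds.congr'
    by_cases hl : l = 1
    · subst hl
      refine Filter.Eventually.of_forall fun P => ?_
      have : (1 : Zω) ∈ TT P := ⟨by simp, fun q _ h => q.2.1.not_isUnit (isUnit_of_dvd_one h)⟩
      simp [this]
    · by_cases h3 : (3 : Zω) ∣ l - 1
      · have hnu : ¬ IsUnit l := fun hu => hl (primary_unit hu h3)
        obtain ⟨z, hz, hzl⟩ := WfDvdMonoid.exists_irreducible_factor hnu (primary_ne_zero h3)
        obtain ⟨q, hq⟩ := exists_PP h3 hz.prime hzl
        filter_upwards [Filter.eventually_ge_atTop {q}] with P hP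
        have : l ∉ TT P := fun h => h.2 q (hP (by simp)) (hq.dvd.trans hzl)
        simp [this, hl]
      · refine Filter.Eventually.of_forall fun P => ?_
        have : l ∉ TT P := fun h => h3 h.1
        simp [this, hl]
  · refine Filter.Eventually.of_forall fun P l => ?_
    exact norm_indicator_le_norm_self _ _

lemma mu_unit {μ : Zω → ℤ} (hμ : IsMoebiusZω μ) {u : Zω} (hu : IsUnit u) : μ u = 1 := by
  have hl0 : lamZ ≠ 0 := by
    intro h
    have := Nm_lam
    rw [h, Nm_eq_zero.2 rfl] at this
    norm_num at this
  obtain ⟨z, hz, -⟩ := WfDvdMonoid.exists_irreducible_factor lam_not_unit hl0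
  have h1 := hμ.2.2.1 u z (by
    obtain ⟨v, hv⟩ := hu.exists_left_inv
    exact ⟨v, 0, by rw [hv]; ring⟩)
  rw [hμ.2.2.2 z hz.prime, hμ.2.2.2 (u * z)
    ((associated_unit_mul_left z u hu).symm.prime hz.prime)] at h1
  linarith

lemma mu_mul_prime {μ : Zω → ℤ} (hμ : IsMoebiusZω μ) {p : Zω} (hp : Prime p) {a : Zω}
    (ha : ¬ p ∣ a) : μ (p * a) = - μ a := by
  rw [hμ.2.2.1 p a (hp.coprime_iff_not_dvd.2 ha), hμ.2.2.2 p hp]; ring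

lemma mu_mul_prime_dvd {μ : Zω → ℤ} (hμ : IsMoebiusZω μ) {p : Zω} (hp : Prime p) {a : Zω}
    (ha : p ∣ a) : μ (p * a) = 0 := by
  apply hμ.2.1
  intro h
  exact hp.not_isUnit (h p (mul_dvd_mul_left p ha))

lemma mu_bound {μ : Zω → ℤ} (hμ : IsMoebiusZω μ) (a : Zω) : |μ a| ≤ 1 := by
  induction a using UniqueFactorizationMonoid.induction_on_prime with
  | h₁ => rw [hμ.2.1 0 not_squarefree_zero]; norm_num
  | h₂ u hu => rw [mu_unit hμ hu]; norm_num
  | h₃ a p ha hp ih =>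
    by_cases h : p ∣ a
    · rw [mu_mul_prime_dvd hμ hp h]; norm_num
    · rw [mu_mul_prime hμ hp h, abs_neg]; exact ih

lemma summable_mu {μ : Zω → ℤ} (hμ : IsMoebiusZω μ) : Summable fun a => (μ a : ℂ) * hN a := by
  refine Summable.of_norm_bounded summable_hN.norm fun a => ?_
  rw [norm_mul]
  have : ‖(μ a : ℂ)‖ ≤ 1 := by
    rw [Complex.norm_intCast]
    exact_mod_cast mu_bound hμ a
  exact mul_le_of_le_one_left (norm_nonneg _) this

open Classical in
lemma A_insert {P : Finset PP} {q : PP} (hq : q ∉ P) :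
    ∑' l : TT (insert q P), hN l = (1 - hN q.1) * ∑' l : TT P, hN l := by
  have h := tsum_TT_insert hq summable_hN
  simp_rw [hN_mul, tsum_mul_left] at h
  linear_combination -h

open Classical in
lemma M_insert {μ : Zω → ℤ} (hμ : IsMoebiusZω μ) {P : Finset PP} {q : PP} (hq : q ∉ P) :
    ∑' l : TT P, (μ l : ℂ) * hN l
      = (1 - hN q.1) * ∑' l : TT (insert q P), (μ l : ℂ) * hN l := by
  have hinj : Function.Injective fun l : Zω => q.1 * l := mul_right_injective₀ q.2.1.ne_zero
  have h := tsum_TT_insert hq (summable_mu hμ)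
  have h2 := tsum_TT_insert hq ((summable_mu hμ).comp_injective hinj)
  simp only [Function.comp] at h2
  have e1 : ∀ l : TT (insert q P), (μ (q.1 * l) : ℂ) * hN (q.1 * l)
      = - hN q.1 * ((μ l : ℂ) * hN l) := by
    intro l
    rw [mu_mul_prime hμ q.2.1 (l.2.2 q (Finset.mem_insert_self _ _)), hN_mul]
    push_cast; ring
  have e2 : ∀ l : TT P, (μ (q.1 * (q.1 * l)) : ℂ) * hN (q.1 * (q.1 * l)) = 0 := by
    intro l
    rw [mu_mul_prime_dvd hμ q.2.1 (dvd_mul_right _ _)]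
    simp
  simp_rw [e1, e2, tsum_mul_left, tsum_zero] at h2
  rw [h, h2]; ring

open Classical in
lemma A_prod (P : Finset PP) :
    ∑' l : TT P, hN l = (∏ q ∈ P, (1 - hN q.1)) * ∑' l : TT ∅, hN l := by
  induction P using Finset.induction_on with
  | empty => simp
  | insert q P hq ih => rw [A_insert hq, ih, Finset.prod_insert hq]; ring

open Classical in
lemma AM_const {μ : Zω → ℤ} (hμ : IsMoebiusZω μ) (P : Finset PP) :
    (∑' l : TT P, hN l) * ∑' l : TT P, (μ l : ℂ) * hN l
      = (∑' l : TT ∅, hN l) * ∑' l : TT ∅, (μ l : ℂ) * hN l := by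
  induction P using Finset.induction_on with
  | empty => rfl
  | insert q P hq ih => rw [A_insert hq, ← ih, M_insert hμ hq]; ring

lemma AM_one {μ : Zω → ℤ} (hμ : IsMoebiusZω μ) (P : Finset PP) :
    (∑' l : TT P, hN l) * ∑' l : TT P, (μ l : ℂ) * hN l = 1 := by
  have h := (tendsto_TT summable_hN).mul (tendsto_TT (summable_mu hμ))
  simp only [AM_const hμ] at h
  rw [AM_const hμ, tendsto_nhds_unique tendsto_const_nhds h]
  simp [hN_one, hμ.1]

lemma card_cpow (a : Zω) : (Nat.card (Zω ⧸ Ideal.span {a}) : ℂ) ^ (-2 : ℂ) = hN a := by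
  have h : (Nat.card (Zω ⧸ Ideal.span {a}) : ℂ) = (Nm a : ℂ) := by
    rw [← card_span]; simp
  rw [h, hN, Complex.cpow_neg]
  norm_cast

lemma zeta_eq : ∑' I : {I : Ideal Zω // I ≠ ⊥}, (Nat.card (Zω ⧸ I.1) : ℂ) ^ (-2 : ℂ)
    = 9 / 8 * ∑' l : TT ∅, hN l := by
  let g : {I : Ideal Zω // I ≠ ⊥} → ℂ := fun I => (Nat.card (Zω ⧸ I.1) : ℂ) ^ (-2 : ℂ)
  have hgen : ∀ I : Ideal Zω, ∃ a, I = Ideal.span {a} := fun I =>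
    (IsPrincipalIdealRing.principal I).principal
  choose γ hγ using hgen
  have hg : ∀ I, g I = hN (γ I.1) := by
    intro I
    rw [← card_cpow, ← hγ]
  have hgs : Summable g := by
    have hinj : Function.Injective fun I : {I : Ideal Zω // I ≠ ⊥} => γ I.1 := by
      intro I J h
      apply Subtype.ext
      rw [hγ I.1, hγ J.1]
      exact congrArg (fun a => Ideal.span {a}) h
    exact (summable_hN.comp_injective hinj).congr fun I => (hg I).symm
  have hl0 : lamZ ≠ 0 := by
    intro h
    have := Nm_lam
    rw [h, Nm_eq_zero.2 rfl] at this
    norm_num at this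
  have hls : Ideal.span {lamZ} ≠ ⊥ := by simpa using hl0
  let φ : (TT ∅) ⊕ {I : Ideal Zω // I ≠ ⊥} → {I : Ideal Zω // I ≠ ⊥} :=
    Sum.elim (fun k => ⟨Ideal.span {k.1}, by simpa using primary_ne_zero k.2.1⟩)
      (fun I => ⟨Ideal.span {lamZ} * I.1, fun h => (Ideal.mul_eq_bot.1 h).elim hls I.2⟩)
  have hno : ∀ a, a ∈ TT ∅ → ∀ I : Ideal Zω, Ideal.span {a} ≠ Ideal.span {lamZ} * I := by
    intro a ha I h
    apply primary_not_lam ha.1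
    have : a ∈ Ideal.span {lamZ} * I := by
      rw [← h]; exact Ideal.mem_span_singleton_self a
    obtain ⟨z, -, hz⟩ := Ideal.mem_span_singleton_mul.1 this
    exact ⟨z, hz.symm⟩
  have hφ : Function.Bijective φ := by
    constructor
    · rintro (⟨a, ha⟩ | ⟨I, hI⟩) (⟨b, hb⟩ | ⟨J, hJ⟩) h
      · have h' := congrArg Subtype.val h
        have : a = b := primary_assoc (Ideal.span_singleton_eq_span_singleton.1 h') ha.1 hb.1
        subst this; rfl
      · exact absurd (congrArg Subtype.val h) (hno a ha J)
      · exact absurd (congrArg Subtype.val h).symm (hno b hb I)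
      · have h' : Ideal.span {lamZ} * I = Ideal.span {lamZ} * J := congrArg Subtype.val h
        have := (Ideal.span_singleton_mul_right_inj hl0).1 h'
        subst this; rfl
    · rintro ⟨I, hI⟩
      obtain ⟨a, rfl⟩ : ∃ a, I = Ideal.span {a} := ⟨_, hγ I⟩
      by_cases hd : lamZ ∣ a
      · obtain ⟨b, rfl⟩ := hd
        have hb : b ≠ 0 := by rintro rfl; simp at hI
        refine ⟨Sum.inr ⟨Ideal.span {b}, by simpa using hb⟩, Subtype.ext ?_⟩
        exact Ideal.span_singleton_mul_span_singleton _ _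
      · obtain ⟨u, hu, h⟩ := exists_primary hd
        refine ⟨Sum.inl ⟨u * a, h, by simp⟩, Subtype.ext ?_⟩
        exact Ideal.span_singleton_eq_span_singleton.2 (associated_unit_mul_left a u hu)
  have key := (Equiv.ofBijective φ hφ).tsum_eq g
  have hs : Summable fun x => g (Equiv.ofBijective φ hφ x) :=
    hgs.comp_injective (Equiv.ofBijective φ hφ).injective
  rw [Summable.tsum_sum (f := fun x => g (Equiv.ofBijective φ hφ x))
    (hs.comp_injective Sum.inl_injective) (hs.comp_injective Sum.inr_injective)] at key
  have e1 : ∀ k : TT ∅, g (Equiv.ofBijective φ hφ (Sum.inl k)) = hN k := fun k => card_cpow k.1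
  have hlam : hN lamZ = 1 / 9 := by rw [hN, Nm_lam]; norm_num
  have e2 : ∀ I, g (Equiv.ofBijective φ hφ (Sum.inr I)) = 1 / 9 * g I := by
    intro I
    have : g (Equiv.ofBijective φ hφ (Sum.inr I))
      = (Nat.card (Zω ⧸ (Ideal.span {lamZ} * I.1)) : ℂ) ^ (-2 : ℂ) := rfl
    rw [this, hg, hγ I.1, Ideal.span_singleton_mul_span_singleton, card_cpow, hN_mul, hlam,
      ← hγ I.1]
  simp_rw [e1, e2, tsum_mul_left] at key
  change ∑' I, g I = _
  linear_combination (-9/8) * key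

lemma finite_PP {m : Zω} (hm0 : m ≠ 0) : {q : PP | q.1 ∣ m}.Finite := by
  have h := summable_hN.norm.tendsto_cofinite_zero
  have hpos : 0 < ‖hN m‖ := by
    rw [norm_hN]
    have := Nm_one_le hm0
    positivity
  have h2 := h.eventually (gt_mem_nhds hpos)
  rw [Filter.eventually_cofinite] at h2
  refine Set.Finite.of_finite_image (f := Subtype.val) (h2.subset ?_)
    Subtype.val_injective.injOn
  rintro _ ⟨q, ⟨c, hc⟩, rfl⟩
  have hq1 := Nm_one_le q.2.1.ne_zero
  have hc0 : c ≠ 0 := by rintro rfl; simp [hm0] at hc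
  have hc1 := Nm_one_le hc0
  simp only [Set.mem_ofPred_eq, not_lt]
  rw [norm_hN, norm_hN, hc, Nm_mul]
  gcongr
  nlinarith

lemma final_aux (μ : Zω → ℤ) (hμ : IsMoebiusZω μ)
    (m : Zω) (hm0 : m ≠ 0) :
    ∑' ℓ : {ℓ : Zω // (3 : Zω) ∣ (ℓ - 1) ∧ IsCoprime ℓ m},
        (μ ℓ.1 : ℂ) / (Nm ℓ.1 : ℂ) ^ 2 =
      9 / (8 * ∑' I : {I : Ideal Zω // I ≠ ⊥}, (Nat.card (Zω ⧸ I.1) : ℂ) ^ (-2 : ℂ)) *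
        ∏' π : {π : Zω // Prime π ∧ (3 : Zω) ∣ (π - 1) ∧ π ∣ m},
          (1 - (Nm π.1 : ℂ) ^ (-2 : ℂ))⁻¹ := by
  classical
  set P : Finset PP := (finite_PP hm0).toFinset with hP
  have hmemP : ∀ q : PP, q ∈ P ↔ q.1 ∣ m := by intro q; simp [hP]
  have hT : {ℓ : Zω | (3 : Zω) ∣ (ℓ - 1) ∧ IsCoprime ℓ m} = TT P := by
    ext l
    constructor
    · rintro ⟨h1, h2⟩
      refine ⟨h1, fun q hq hql => q.2.1.not_isUnit ?_⟩
      exact h2.isUnit_of_dvd' hql ((hmemP q).1 hq)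
    · rintro ⟨h1, h2⟩
      refine ⟨h1, isCoprime_of_prime_dvd (fun h => hm0 h.2) fun z hz hzl hzm => ?_⟩
      obtain ⟨q, hq⟩ := exists_PP h1 hz hzl
      exact h2 q ((hmemP q).2 (hq.dvd.trans hzm)) (hq.dvd.trans hzl)
  have hL : ∑' ℓ : {ℓ : Zω // (3 : Zω) ∣ (ℓ - 1) ∧ IsCoprime ℓ m},
        (μ ℓ.1 : ℂ) / (Nm ℓ.1 : ℂ) ^ 2 = ∑' l : TT P, (μ l : ℂ) * hN l := by
    rw [← hT]; rfl
  have hR : ∏' π : {π : Zω // Prime π ∧ (3 : Zω) ∣ (π - 1) ∧ π ∣ m},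
          (1 - (Nm π.1 : ℂ) ^ (-2 : ℂ))⁻¹ = ∏ q ∈ P, (1 - hN q.1)⁻¹ := by
    let e : {π : Zω // Prime π ∧ (3 : Zω) ∣ (π - 1) ∧ π ∣ m} ≃ P :=
      { toFun := fun x => ⟨⟨x.1, x.2.1, x.2.2.1⟩, (hmemP _).2 x.2.2.2⟩
        invFun := fun x => ⟨x.1.1, x.1.2.1, x.1.2.2, (hmemP _).1 x.2⟩
        left_inv := fun x => rfl
        right_inv := fun x => rfl }
    rw [← Finset.tprod_subtype P (fun q : PP => (1 - hN q.1)⁻¹), ← e.tprod_eq]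
    refine tprod_congr fun x => ?_
    have : (Nm x.1 : ℂ) ^ (-2 : ℂ) = hN x.1 := by
      rw [hN, Complex.cpow_neg]; norm_cast
    rw [this]; rfl
  rw [hL, hR, zeta_eq]
  have h1 := AM_one hμ P
  rw [A_prod] at h1
  have hA : (∑' l : TT ∅, hN l) ≠ 0 := by
    intro h; rw [h] at h1; simp at h1
  have hpr : ∏ q ∈ P, (1 - hN q.1) ≠ 0 := by
    intro h; rw [h] at h1; simp at h1
  rw [Finset.prod_inv_distrib]
  field_simp
  linear_combination h1

open Complex in
/-- for `m ≡ 1 (mod 3)`,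
`Σ_{ℓ ≡ 1 (3), (ℓ,m)=1} μ(ℓ)/N(ℓ)² = (9/(8 ζ_{ℚ(ω)}(2))) ∏_{π ≡ 1 (3), π ∣ m} (1 - N(π)^{-2})⁻¹`. -/
theorem moebius_sum_coprime (μ : Zω → ℤ) (hμ : IsMoebiusZω μ)
    (m : Zω) (hm : (3 : Zω) ∣ (m - 1)) (hm0 : m ≠ 0) :
    ∑' ℓ : {ℓ : Zω // (3 : Zω) ∣ (ℓ - 1) ∧ IsCoprime ℓ m},
        (μ ℓ.1 : ℂ) / (Nm ℓ.1 : ℂ) ^ 2 =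
      9 / (8 * ∑' I : {I : Ideal Zω // I ≠ ⊥}, (Nat.card (Zω ⧸ I.1) : ℂ) ^ (-2 : ℂ)) *
        ∏' π : {π : Zω // Prime π ∧ (3 : Zω) ∣ (π - 1) ∧ π ∣ m},
          (1 - (Nm π.1 : ℂ) ^ (-2 : ℂ))⁻¹ := by
  exact final_aux μ hμ m hm0
end

section
/- Let σ(d) = Σ_{e | d, e ≡ 1 (mod 3)} N(e) be the sum-of-divisors function on ℤ[ω]. For squarefree elements, Σ_{d squarefree, d ≡ 1 (mod 3), gcd(d,r)=1} μ(d)/(N(d)·σ(d)) · ∏_{π|d}(1 − N(π)^{−2})^{−1} · Σ_{c|d} μ(c)/N(c) = ∏_{π ≡ 1 (mod 3)} (1 − 1/(N(π)+1)²) · ∏_{π | r} (1 − 1/(N(π)+1)²)^{−1}. -/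
open Complex

noncomputable section

/-- The sum-of-primary-divisors function `σ(d) = Σ_{e ∣ d, e ≡ 1 (mod 3)} N(e)` on `ℤ[ω]`. -/
def sigmaC (d : Zω) : ℂ :=
  ∑' e : {e : Zω // (3 : Zω) ∣ (e - 1) ∧ e ∣ d}, (Nm e.1 : ℂ)

namespace EisAux

lemma omega_eq : ω = ⟨-1/2, Real.sqrt 3 / 2⟩ := by
  have h : (2 * Real.pi * Complex.I / 3 : ℂ) = ((Real.pi - Real.pi / 3 : ℝ) : ℂ) * Complex.I := by
    push_cast; ring
  rw [ω, h, Complex.exp_mul_I, ← Complex.ofReal_cos, ← Complex.ofReal_sin, Real.cos_pi_sub,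
    Real.sin_pi_sub, Real.cos_pi_div_three, Real.sin_pi_div_three]
  apply Complex.ext <;> simp
  norm_num

lemma sq3 : Real.sqrt 3 * Real.sqrt 3 = 3 := Real.mul_self_sqrt (by norm_num)

lemma omega_sq : ω * ω = -1 - ω := by
  rw [omega_eq]
  apply Complex.ext <;> simp <;> nlinarith [sq3]

lemma ns (x y : ℝ) : Complex.normSq ((x : ℂ) + y * ω) = x ^ 2 - x * y + y ^ 2 := by
  rw [omega_eq, Complex.normSq_apply]
  simp
  nlinarith [sq3]

/-- the element `x + y ω` -/
def mk (x y : ℤ) : Zω := (x : Zω) + (y : Zω) * ωZ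

lemma mk_coe (x y : ℤ) : ((mk x y : Zω) : ℂ) = (x : ℂ) + y * ω := by
  simp [mk, ωZ]

lemma exists_mk (a : Zω) : ∃ x y : ℤ, a = mk x y := by
  suffices h : ∀ z ∈ Zω, ∃ x y : ℤ, z = (x : ℂ) + y * ω by
    obtain ⟨x, y, h⟩ := h a a.2
    exact ⟨x, y, Subtype.ext (by rw [mk_coe, h])⟩
  intro z hz
  induction hz using Subring.closure_induction with
  | mem x hx => exact ⟨0, 1, by simpa using hx⟩
  | zero => exact ⟨0, 0, by simp⟩
  | one => exact ⟨1, 0, by simp⟩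
  | add a b _ _ ha hb =>
    obtain ⟨x, y, rfl⟩ := ha
    obtain ⟨u, v, rfl⟩ := hb
    exact ⟨x + u, y + v, by push_cast; ring⟩
  | neg a _ ha =>
    obtain ⟨x, y, rfl⟩ := ha
    exact ⟨-x, -y, by push_cast; ring⟩
  | mul a b _ _ ha hb =>
    obtain ⟨x, y, rfl⟩ := ha
    obtain ⟨u, v, rfl⟩ := hb
    refine ⟨x * u - y * v, x * v + y * u - y * v, ?_⟩
    push_cast
    linear_combination (y * v : ℂ) * omega_sq

lemma Nm_mk (x y : ℤ) : Nm (mk x y) = ((x ^ 2 - x * y + y ^ 2 : ℤ) : ℝ) := by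
  rw [Nm, mk_coe]
  have := ns x y
  push_cast at this ⊢
  exact this

lemma Nm_nonneg (a : Zω) : 0 ≤ Nm a := Complex.normSq_nonneg _

lemma Nm_mul (a b : Zω) : Nm (a * b) = Nm a * Nm b := by simp [Nm]

lemma Nm_one : Nm 1 = 1 := by simp [Nm]

lemma Nm_eq_zero {a : Zω} : Nm a = 0 ↔ a = 0 := by simp [Nm]

lemma exists_nat (a : Zω) : ∃ n : ℕ, Nm a = n := by
  obtain ⟨x, y, rfl⟩ := exists_mk a
  refine ⟨(x ^ 2 - x * y + y ^ 2).toNat, ?_⟩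
  have h : 0 ≤ x ^ 2 - x * y + y ^ 2 := by nlinarith [sq_nonneg (x - y), sq_nonneg x, sq_nonneg y]
  rw [Nm_mk]
  exact_mod_cast (Int.toNat_of_nonneg h).symm

lemma one_le_Nm {a : Zω} (ha : a ≠ 0) : 1 ≤ Nm a := by
  obtain ⟨n, hn⟩ := exists_nat a
  have : n ≠ 0 := by
    rintro rfl
    exact ha (Nm_eq_zero.1 (by simpa using hn))
  rw [hn]
  exact_mod_cast Nat.one_le_iff_ne_zero.2 this

lemma unit_Nm {a : Zω} (ha : IsUnit a) : Nm a = 1 := by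
  obtain ⟨b, hb⟩ := ha.exists_right_inv
  have h : Nm a * Nm b = 1 := by rw [← Nm_mul, hb, Nm_one]
  have ha0 : a ≠ 0 := ha.ne_zero
  have hb0 : b ≠ 0 := by rintro rfl; simp at hb
  nlinarith [one_le_Nm ha0, one_le_Nm hb0]

lemma exists_quot (a b : Zω) : ∃ q : Zω, (b = 0 → q = 0) ∧ (b ≠ 0 → Nm (a - b * q) < Nm b) := by
  by_cases hb : b = 0
  · exact ⟨0, fun _ => rfl, fun h => absurd hb h⟩
  have hbc : (b : ℂ) ≠ 0 := by simpa using hb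
  set z : ℂ := (a : ℂ) / b with hz
  set t : ℝ := z.im * 2 / Real.sqrt 3 with ht
  set s : ℝ := z.re + t / 2 with hs
  have h3 : Real.sqrt 3 ≠ 0 := by positivity
  have hzz : z = (s : ℂ) + t * ω := by
    rw [omega_eq]
    apply Complex.ext
    · simp [hs]; ring
    · simp [ht]; field_simp
  refine ⟨mk (round s) (round t), fun h => absurd h hb, fun _ => ?_⟩
  have e : ((a - b * mk (round s) (round t) : Zω) : ℂ) =
      b * (((s - round s : ℝ) : ℂ) + ((t - round t : ℝ) : ℂ) * ω) := by
    have : (a : ℂ) = b * z := by rw [hz]; field_simp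
    push_cast
    rw [mk_coe, this, hzz]
    ring
  unfold Nm
  rw [e, Complex.normSq_mul, ns]
  have hpos : 0 < Complex.normSq (b : ℂ) := Complex.normSq_pos.2 hbc
  have h1 := abs_le.1 (abs_sub_round s)
  have h2 := abs_le.1 (abs_sub_round t)
  have : (s - round s) ^ 2 - (s - round s) * (t - round t) + (t - round t) ^ 2 < 1 := by
    nlinarith [h1.1, h1.2, h2.1, h2.2]
  nlinarith

lemma pid : IsPrincipalIdealRing Zω := by
  choose q hq using exists_quot
  let E : EuclideanDomain Zω :=
    { (inferInstance : CommRing Zω), (inferInstance : Nontrivial Zω) with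
      quotient := q
      quotient_zero := fun a => (hq a 0).1 rfl
      remainder := fun a b => a - b * q a b
      quotient_mul_add_remainder_eq := fun a b => by ring
      r := fun a b => Nm a < Nm b
      r_wellFounded := by
        choose n hn using exists_nat
        have : (fun a b : Zω => Nm a < Nm b) = InvImage (· < ·) n := by
          funext a b
          simp [InvImage, hn]
        rw [this]
        exact InvImage.wf _ wellFounded_lt
      remainder_lt := fun a b hb => (hq a b).2 hb
      mul_left_not_lt := fun a b hb => by
        rw [Nm_mul, not_lt]
        nlinarith [one_le_Nm hb, Nm_nonneg a] }
  exact @EuclideanDomain.to_principal_ideal_domain Zω E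

instance : IsPrincipalIdealRing Zω := pid

/-- primary elements -/
def Pr (a : Zω) : Prop := (3 : Zω) ∣ (a - 1)

lemma Pr.one : Pr 1 := by simp [Pr]

lemma Pr.mul {a b : Zω} (ha : Pr a) (hb : Pr b) : Pr (a * b) := by
  have : a * b - 1 = (a - 1) * b + (b - 1) := by ring
  rw [Pr, this]
  exact dvd_add (ha.mul_right b) hb

lemma Pr.of_mul {a b : Zω} (ha : Pr a) (hb : Pr (a * b)) : Pr b := by
  have : b - 1 = (a * b - 1) - (a - 1) * b := by ring
  rw [Pr, this]
  exact dvd_sub hb (ha.mul_right b)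

lemma Pr.coprime {a : Zω} (ha : Pr a) : IsCoprime a 3 := by
  obtain ⟨c, hc⟩ := ha
  exact ⟨1, -c, by linear_combination hc⟩

lemma unit_primary {u : Zω} (hu : IsUnit u) (h : Pr u) : u = 1 := by
  obtain ⟨v, hv⟩ := h
  by_contra hne
  have hv0 : v ≠ 0 := by
    rintro rfl
    exact hne (by linear_combination hv)
  have h1 : Nm (u - 1) = 9 * Nm v := by
    rw [hv, Nm_mul]
    congr 1
    have h3 : ((3 : Zω) : ℂ) = 3 := rfl
    rw [Nm, h3, Complex.normSq_apply]
    norm_num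
  have h2 := one_le_Nm hv0
  have h3 := unit_Nm hu
  simp only [Nm, Complex.normSq_apply] at h1 h2 h3
  simp at h1
  nlinarith [sq_nonneg ((u : ℂ).re + 1), sq_nonneg ((u : ℂ).im)]

lemma omegaZ_sq : ωZ * ωZ = -1 - ωZ := by
  apply Subtype.ext
  simpa [ωZ] using omega_sq

lemma exists_primary {a : Zω} (ha : IsCoprime a 3) : ∃ u : Zω, IsUnit u ∧ Pr (u * a) := by
  obtain ⟨x, y, rfl⟩ := exists_mk a
  have hw : IsUnit ωZ := IsUnit.of_mul_eq_one (-1 - ωZ) (by linear_combination -omegaZ_sq)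
  have hw2 : IsUnit (-1 - ωZ) := by rw [← omegaZ_sq]; exact hw.mul hw
  have hcases : (3 : ℤ) ∣ x + y ∨ ((3 : ℤ) ∣ x - 1 ∧ (3 : ℤ) ∣ y) ∨ ((3 : ℤ) ∣ x + 1 ∧ (3 : ℤ) ∣ y)
    ∨ ((3 : ℤ) ∣ x ∧ (3 : ℤ) ∣ y - 1) ∨ ((3 : ℤ) ∣ x ∧ (3 : ℤ) ∣ y + 1)
    ∨ ((3 : ℤ) ∣ x + 1 ∧ (3 : ℤ) ∣ y + 1) ∨ ((3 : ℤ) ∣ x - 1 ∧ (3 : ℤ) ∣ y - 1) := by omega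
  rcases hcases with h | h | h | h | h | h | h
  · exfalso
    obtain ⟨k, hk⟩ := h
    have hk' : (x : Zω) + y = 3 * k := by exact_mod_cast hk
    have d3 : (1 - ωZ) ∣ (3 : Zω) := ⟨2 + ωZ, by linear_combination omegaZ_sq⟩
    have da : (1 - ωZ) ∣ mk x y := by
      have : mk x y = 3 * k - y * (1 - ωZ) := by rw [mk, ← hk']; ring
      rw [this]
      exact dvd_sub (d3.mul_right _) (dvd_mul_left _ _)
    have hu : IsUnit (1 - ωZ) := ha.isUnit_of_dvd' da d3
    have := unit_Nm hu
    have e : (1 - ωZ) = mk 1 (-1) := by simp [mk]; ring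
    rw [e, Nm_mk] at this
    norm_num at this
  all_goals
    obtain ⟨⟨k, hk⟩, ⟨l, hl⟩⟩ := h
  · have hk' : (x : Zω) - 1 = 3 * k := by exact_mod_cast hk
    have hl' : (y : Zω) = 3 * l := by exact_mod_cast hl
    exact ⟨1, isUnit_one, k + l * ωZ, by simp only [mk]; linear_combination hk' + ωZ * hl'⟩
  · have hk' : (x : Zω) + 1 = 3 * k := by exact_mod_cast hk
    have hl' : (y : Zω) = 3 * l := by exact_mod_cast hl
    exact ⟨-1, isUnit_one.neg, -(k + l * ωZ), by
      simp only [mk]; linear_combination -hk' - ωZ * hl'⟩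
  · have hk' : (x : Zω) = 3 * k := by exact_mod_cast hk
    have hl' : (y : Zω) - 1 = 3 * l := by exact_mod_cast hl
    exact ⟨_, hw2, (-1 - ωZ) * (k + l * ωZ), by
      simp only [mk]; linear_combination (-1 - ωZ) * (hk' + ωZ * hl') - omegaZ_sq⟩
  · have hk' : (x : Zω) = 3 * k := by exact_mod_cast hk
    have hl' : (y : Zω) + 1 = 3 * l := by exact_mod_cast hl
    exact ⟨_, hw2.neg, -(-1 - ωZ) * (k + l * ωZ), by
      simp only [mk]; linear_combination -(-1 - ωZ) * (hk' + ωZ * hl') - omegaZ_sq⟩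
  · have hk' : (x : Zω) + 1 = 3 * k := by exact_mod_cast hk
    have hl' : (y : Zω) + 1 = 3 * l := by exact_mod_cast hl
    exact ⟨_, hw, ωZ * (k + l * ωZ), by
      simp only [mk]; linear_combination ωZ * (hk' + ωZ * hl') - omegaZ_sq⟩
  · have hk' : (x : Zω) - 1 = 3 * k := by exact_mod_cast hk
    have hl' : (y : Zω) - 1 = 3 * l := by exact_mod_cast hl
    exact ⟨_, hw.neg, -ωZ * (k + l * ωZ), by
      simp only [mk]; linear_combination -ωZ * (hk' + ωZ * hl') - omegaZ_sq⟩

/-- primary primes -/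
abbrev P := {π : Zω // Prime π ∧ Pr π}

lemma P_dvd {p q : P} (h : p.1 ∣ q.1) : p = q := by
  have ha : Associated p.1 q.1 := (p.2.1.dvd_prime_iff_associated q.2.1).1 h
  obtain ⟨u, hu⟩ := ha
  have : (u : Zω) = 1 := unit_primary u.isUnit (p.2.2.of_mul (by rw [hu]; exact q.2.2))
  apply Subtype.ext
  rw [← hu, this, mul_one]

lemma exists_multiset (a : Zω) : a ≠ 0 → IsCoprime a 3 →
    ∃ m : Multiset P, Associated (m.map Subtype.val).prod a := by
  induction a using UniqueFactorizationMonoid.induction_on_prime with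
  | h₁ => intro h; exact absurd rfl h
  | h₂ x hx => intro _ _; exact ⟨0, by simpa using (associated_one_iff_isUnit.2 hx).symm⟩
  | h₃ a p ha hp ih =>
    intro _ hc
    obtain ⟨m, hm⟩ := ih ha hc.of_mul_left_right
    obtain ⟨u, hu, hup⟩ := exists_primary hc.of_mul_left_left
    have has : Associated (u * p) p := associated_unit_mul_left p u hu
    refine ⟨⟨u * p, has.symm.prime hp, hup⟩ ::ₘ m, ?_⟩
    simpa using has.mul_mul hm

lemma pr_prod (s : Finset P) : Pr (∏ p ∈ s, p.1) := by
  classical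
  induction s using Finset.induction_on with
  | empty => simpa using Pr.one
  | insert a s ha ih => rw [Finset.prod_insert ha]; exact a.2.2.mul ih

lemma dvd_prod_iff {p : P} {s : Finset P} : p.1 ∣ ∏ q ∈ s, q.1 ↔ p ∈ s := by
  constructor
  · intro h
    obtain ⟨q, hq, hpq⟩ := (p.2.1.dvd_finsetProd_iff _).1 h
    rwa [P_dvd hpq]
  · intro h
    exact Finset.dvd_prod_of_mem (fun q : P => q.1) h

lemma prod_inj {s t : Finset P} (h : ∏ q ∈ s, q.1 = ∏ q ∈ t, q.1) : s = t := by
  ext p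
  rw [← dvd_prod_iff, ← dvd_prod_iff, h]

lemma prod_coprime {s : Finset P} {b : Zω} (h : ∀ p ∈ s, ¬ p.1 ∣ b) :
    IsCoprime (∏ q ∈ s, q.1) b :=
  IsCoprime.prod_left fun p hp => (p.2.1.coprime_iff_not_dvd).2 (h p hp)

lemma prod_squarefree (s : Finset P) : Squarefree (∏ q ∈ s, q.1) := by
  classical
  induction s using Finset.induction_on with
  | empty => simp
  | insert a s ha ih =>
    rw [Finset.prod_insert ha, squarefree_mul_iff]
    refine ⟨?_, a.2.1.squarefree, ih⟩
    exact ((a.2.1.coprime_iff_not_dvd).2 (by rwa [dvd_prod_iff])).isRelPrime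

lemma exists_finset {d : Zω} (hs : Squarefree d) (hd : Pr d) : ∃ s : Finset P, ∏ q ∈ s, q.1 = d := by
  classical
  obtain ⟨m, u, hu⟩ := exists_multiset d hs.ne_zero hd.coprime
  have hnd : m.Nodup := by
    rw [Multiset.nodup_iff_le]
    intro p hp
    have h1 : ((p ::ₘ p ::ₘ (0 : Multiset P)).map Subtype.val).prod ∣ (m.map Subtype.val).prod :=
      Multiset.prod_dvd_prod_of_le (Multiset.map_le_map hp)
    have h2 : p.1 * p.1 ∣ d := by
      rw [← hu]
      refine Dvd.dvd.mul_right ?_ _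
      simpa using h1
    exact p.2.1.not_isUnit (hs _ h2)
  have hm : ∏ q ∈ (⟨m, hnd⟩ : Finset P), q.1 = (m.map Subtype.val).prod := rfl
  refine ⟨⟨m, hnd⟩, ?_⟩
  have : (u : Zω) = 1 := unit_primary u.isUnit ((pr_prod ⟨m, hnd⟩).of_mul (by rw [hm, hu]; exact hd))
  rw [hm, ← hu, this, mul_one]

lemma finite_dvd {r : Zω} (hr : Pr r) (hr0 : r ≠ 0) : {p : P | p.1 ∣ r}.Finite := by
  classical
  obtain ⟨m, hm⟩ := exists_multiset r hr0 hr.coprime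
  refine m.toFinset.finite_toSet.subset ?_
  intro p hp
  have h : p.1 ∣ (m.map Subtype.val).prod := hm.symm.dvd_iff_dvd_right.1 hp
  obtain ⟨q, hq, hpq⟩ := p.2.1.exists_mem_multiset_map_dvd h
  rw [P_dvd hpq]
  simpa using hq

lemma summable_P : Summable fun p : P => 1 / (Nm p.1 + 1) ^ 2 := by
  choose x y hxy using exists_mk
  let c : P → (Fin 2 → ℤ) := fun p => ![x p.1, y p.1]
  have hc : Function.Injective c := by
    intro p q h
    have h0 := congrFun h 0
    have h1 := congrFun h 1
    simp only [c, Matrix.cons_val_zero, Matrix.cons_val_one] at h0 h1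
    apply Subtype.ext
    rw [hxy p.1, hxy q.1, h0, h1]
  have hS := ((EisensteinSeries.summable_one_div_norm_rpow (k := 4) (by norm_num)).comp_injective
    hc).mul_left 4
  refine Summable.of_nonneg_of_le (fun p => by positivity) (fun p => ?_) hS
  have hN : Nm p.1 = (x p.1 : ℝ) ^ 2 - x p.1 * y p.1 + (y p.1 : ℝ) ^ 2 := by
    conv_lhs => rw [hxy p.1]
    rw [Nm_mk]; push_cast; ring
  have hNpos := one_le_Nm p.2.1.ne_zero
  have hle : ‖c p‖ ≤ Real.sqrt (2 * Nm p.1) := by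
    rw [pi_norm_le_iff_of_nonneg (Real.sqrt_nonneg _)]
    intro i
    fin_cases i
    · simp only [c, Int.norm_eq_abs]
      apply Real.abs_le_sqrt
      simp
      nlinarith [sq_nonneg ((x p.1 : ℝ) - y p.1), sq_nonneg (y p.1 : ℝ)]
    · simp only [c, Int.norm_eq_abs]
      apply Real.abs_le_sqrt
      simp
      nlinarith [sq_nonneg ((x p.1 : ℝ) - y p.1), sq_nonneg (x p.1 : ℝ)]
  have hpos : 0 < ‖c p‖ := by
    rw [norm_pos_iff]
    intro h
    have h0 := congrFun h 0
    have h1 := congrFun h 1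
    simp [c] at h0 h1
    rw [h0, h1] at hN
    norm_num at hN
    linarith
  have hsq : ‖c p‖ ^ 2 ≤ 2 * Nm p.1 := by
    rw [← Real.sq_sqrt (show 0 ≤ 2 * Nm p.1 by linarith)]
    gcongr
  have h4 : ‖c p‖ ^ 4 ≤ 4 * (Nm p.1 + 1) ^ 2 := by
    have : ‖c p‖ ^ 4 ≤ (2 * Nm p.1) ^ 2 := by
      calc ‖c p‖ ^ 4 = (‖c p‖ ^ 2) ^ 2 := by ring
        _ ≤ _ := by gcongr
    nlinarith
  have e : ‖c p‖ ^ (-4 : ℝ) = (‖c p‖ ^ 4)⁻¹ := by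
    rw [Real.rpow_neg hpos.le]
    norm_cast
  show _ ≤ 4 * ‖c p‖ ^ (-4 : ℝ)
  rw [e, ← div_eq_mul_inv, div_le_div_iff₀ (by positivity) (by positivity)]
  linarith

lemma mu_prod {μ : Zω → ℤ} (hμ : IsMoebiusZω μ) (s : Finset P) :
    μ (∏ p ∈ s, p.1) = ∏ _p ∈ s, (-1) := by
  classical
  induction s using Finset.induction_on with
  | empty => simpa using hμ.1
  | insert a s ha ih =>
    rw [Finset.prod_insert ha, Finset.prod_insert ha, ← ih, ← hμ.2.2.2 a.1 a.2.1]
    exact hμ.2.2.1 _ _ ((a.2.1.coprime_iff_not_dvd).2 (by rwa [dvd_prod_iff]))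

lemma Nm_prod (s : Finset P) : Nm (∏ p ∈ s, p.1) = ∏ p ∈ s, Nm p.1 := by
  classical
  induction s using Finset.induction_on with
  | empty => simpa using Nm_one
  | insert a s ha ih => rw [Finset.prod_insert ha, Finset.prod_insert ha, Nm_mul, ih]

lemma tsum_div (s : Finset P) (g : Zω → ℂ) :
    ∑' c : {c : Zω // (3 : Zω) ∣ (c - 1) ∧ c ∣ ∏ p ∈ s, p.1}, g c.1 =
      ∑ t ∈ s.powerset, g (∏ p ∈ t, p.1) := by
  rw [← Finset.tsum_subtype]
  let F : {t // t ∈ s.powerset} → {c : Zω // (3 : Zω) ∣ (c - 1) ∧ c ∣ ∏ p ∈ s, p.1} :=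
    fun t => ⟨∏ p ∈ t.1, p.1, pr_prod t.1,
      Finset.prod_dvd_prod_of_subset _ _ _ (Finset.mem_powerset.1 t.2)⟩
  have hF : Function.Bijective F := by
    constructor
    · intro t u h
      exact Subtype.ext (prod_inj (congrArg Subtype.val h))
    · rintro ⟨c, hc, hcs⟩
      obtain ⟨t, rfl⟩ := exists_finset ((prod_squarefree s).squarefree_of_dvd hcs) hc
      refine ⟨⟨t, ?_⟩, rfl⟩
      rw [Finset.mem_powerset]
      intro p hp
      exact dvd_prod_iff.1 ((dvd_prod_iff.2 hp).trans hcs)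
  exact ((Equiv.ofBijective F hF).tsum_eq fun c => g c.1).symm

lemma tprod_div (s : Finset P) (g : Zω → ℂ) :
    ∏' π : {π : Zω // Prime π ∧ (3 : Zω) ∣ (π - 1) ∧ π ∣ ∏ p ∈ s, p.1}, g π.1 =
      ∏ p ∈ s, g p.1 := by
  rw [← Finset.tprod_subtype s (fun p => g p.1)]
  let F : {p // p ∈ s} → {π : Zω // Prime π ∧ (3 : Zω) ∣ (π - 1) ∧ π ∣ ∏ p ∈ s, p.1} :=
    fun p => ⟨p.1.1, p.1.2.1, p.1.2.2, dvd_prod_iff.2 p.2⟩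
  have hF : Function.Bijective F := by
    constructor
    · intro t u h
      exact Subtype.ext (Subtype.ext (congrArg (fun z => z.1) h))
    · rintro ⟨c, hc, hc3, hcs⟩
      exact ⟨⟨⟨c, hc, hc3⟩, dvd_prod_iff.1 hcs⟩, rfl⟩
  exact ((Equiv.ofBijective F hF).tprod_eq fun c => g c.1).symm

lemma one_lt_Nm (p : P) : 1 < Nm p.1 := by
  refine lt_of_le_of_ne (one_le_Nm p.2.1.ne_zero) ?_
  intro h
  apply p.2.1.not_isUnit
  obtain ⟨x, y, hxy⟩ := exists_mk p.1
  rw [hxy, Nm_mk] at h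
  have hN : (x : ℂ) ^ 2 - x * y + (y : ℂ) ^ 2 = 1 := by exact_mod_cast h.symm
  refine IsUnit.of_mul_eq_one (mk (x - y) (-y)) (Subtype.ext ?_)
  rw [hxy]
  push_cast
  rw [mk_coe, mk_coe]
  push_cast
  linear_combination hN - (y : ℂ) ^ 2 * omega_sq

lemma term_eq {μ : Zω → ℤ} (hμ : IsMoebiusZω μ) (s : Finset P) :
    (μ (∏ p ∈ s, p.1) : ℂ) / ((Nm (∏ p ∈ s, p.1) : ℂ) * sigmaC (∏ p ∈ s, p.1)) *
          (∏' π : {π : Zω // Prime π ∧ (3 : Zω) ∣ (π - 1) ∧ π ∣ (∏ p ∈ s, p.1)},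
            (1 - (Nm π.1 : ℂ) ^ (-2 : ℤ))⁻¹) *
          ∑' c : {c : Zω // (3 : Zω) ∣ (c - 1) ∧ c ∣ (∏ p ∈ s, p.1)}, (μ c.1 : ℂ) / (Nm c.1 : ℂ)
      = ∏ p ∈ s, (-(1 / ((Nm p.1 : ℂ) + 1) ^ 2)) := by
  have hσ : sigmaC (∏ p ∈ s, p.1) = ∏ p ∈ s, (1 + (Nm p.1 : ℂ)) := by
    rw [sigmaC, tsum_div s (fun e => (Nm e : ℂ)), Finset.prod_one_add]
    refine Finset.sum_congr rfl fun t _ => ?_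
    rw [Nm_prod]; push_cast; rfl
  have hm : ∑' c : {c : Zω // (3 : Zω) ∣ (c - 1) ∧ c ∣ (∏ p ∈ s, p.1)},
      (μ c.1 : ℂ) / (Nm c.1 : ℂ) = ∏ p ∈ s, (1 + (-1) / (Nm p.1 : ℂ)) := by
    rw [tsum_div s (fun c => (μ c : ℂ) / (Nm c : ℂ)), Finset.prod_one_add]
    refine Finset.sum_congr rfl fun t _ => ?_
    rw [Nm_prod, mu_prod hμ, Finset.prod_div_distrib]; push_cast; rfl
  rw [hσ, hm, tprod_div s (fun π => (1 - (Nm π : ℂ) ^ (-2 : ℤ))⁻¹), mu_prod hμ, Nm_prod]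
  push_cast
  rw [← Finset.prod_mul_distrib, ← Finset.prod_div_distrib, ← Finset.prod_mul_distrib,
    ← Finset.prod_mul_distrib]
  refine Finset.prod_congr rfl fun p _ => ?_
  have h := one_lt_Nm p
  have e : (1 : ℂ) - (Nm p.1 : ℂ) ^ (-2 : ℤ) =
      ((Nm p.1 - 1 : ℝ) : ℂ) * ((Nm p.1 + 1 : ℝ) : ℂ) / (Nm p.1 : ℂ) ^ 2 := by
    have : (Nm p.1 : ℂ) ≠ 0 := by exact_mod_cast (by linarith : Nm p.1 ≠ 0)
    rw [zpow_neg]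
    push_cast
    norm_cast
    field_simp
    push_cast
    ring
  rw [e]
  have h1 : (Nm p.1 : ℂ) ≠ 0 := by exact_mod_cast (by linarith : Nm p.1 ≠ 0)
  have h2 : (Nm p.1 : ℂ) - 1 ≠ 0 := by exact_mod_cast (by linarith : Nm p.1 - 1 ≠ 0)
  have h3 : (Nm p.1 : ℂ) + 1 ≠ 0 := by exact_mod_cast (by linarith : Nm p.1 + 1 ≠ 0)
  push_cast
  rw [add_comm 1 (Nm p.1 : ℂ)]
  field_simp
  ring

open Classical in
lemma main {μ : Zω → ℤ} (hμ : IsMoebiusZω μ)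
    (r : Zω) (hr : (3 : Zω) ∣ (r - 1)) (hr0 : r ≠ 0) :
    ∑' d : {d : Zω // Squarefree d ∧ (3 : Zω) ∣ (d - 1) ∧ IsCoprime d r},
        (μ d.1 : ℂ) / ((Nm d.1 : ℂ) * sigmaC d.1) *
          (∏' π : {π : Zω // Prime π ∧ (3 : Zω) ∣ (π - 1) ∧ π ∣ d.1},
            (1 - (Nm π.1 : ℂ) ^ (-2 : ℤ))⁻¹) *
          ∑' c : {c : Zω // (3 : Zω) ∣ (c - 1) ∧ c ∣ d.1}, (μ c.1 : ℂ) / (Nm c.1 : ℂ) =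
      (∏' π : {π : Zω // Prime π ∧ (3 : Zω) ∣ (π - 1)},
          (1 - 1 / ((Nm π.1 : ℂ) + 1) ^ 2)) *
        ∏' π : {π : Zω // Prime π ∧ (3 : Zω) ∣ (π - 1) ∧ π ∣ r},
          (1 - 1 / ((Nm π.1 : ℂ) + 1) ^ 2)⁻¹ := by
  set g : P → ℂ := fun p => -(1 / ((Nm p.1 : ℂ) + 1) ^ 2) with hg
  set f : P → ℂ := fun p => if p.1 ∣ r then 0 else g p with hf
  set h : P → ℂ := fun p => if p.1 ∣ r then (1 + g p)⁻¹ else 1 with hh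
  have hgn : ∀ p, ‖g p‖ = 1 / (Nm p.1 + 1) ^ 2 := by
    intro p
    have : 0 ≤ Nm p.1 + 1 := by linarith [one_lt_Nm p]
    have e : g p = ((-(1 / (Nm p.1 + 1) ^ 2) : ℝ) : ℂ) := by simp [hg]
    rw [e, Complex.norm_real, norm_neg, Real.norm_of_nonneg (by positivity)]
  have hgs : Summable fun p => ‖g p‖ := by
    simp_rw [hgn]; exact summable_P
  have hfs : Summable fun p => ‖f p‖ := by
    refine Summable.of_nonneg_of_le (fun p => norm_nonneg _) (fun p => ?_) hgs
    simp only [hf]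
    split_ifs <;> simp
  have hg1 : ∀ p, 1 + g p ≠ 0 := by
    intro p h0
    have h1 : g p = -1 := by linear_combination h0
    have h2 := hgn p
    rw [h1] at h2
    have h3 := one_lt_Nm p
    simp at h2
    rcases h2 with h2 | h2 <;> linarith
  have hmul : ∀ p, 1 + f p = (1 + g p) * h p := by
    intro p
    simp only [hf, hh]
    split_ifs
    · rw [mul_inv_cancel₀ (hg1 p), add_zero]
    · rw [mul_one]
  have hgm : Multipliable fun p => 1 + g p := multipliable_one_add_of_summable hgs
  have hsupp : Function.mulSupport h ⊆ {p : P | p.1 ∣ r} := by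
    intro p hp
    by_contra hn
    exact hp (if_neg hn)
  have hhm : Multipliable h := multipliable_of_hasFiniteMulSupport ((finite_dvd hr hr0).subset hsupp)
  -- the right-hand side
  have hR : ∏' π : {π : Zω // Prime π ∧ (3 : Zω) ∣ (π - 1) ∧ π ∣ r},
          (1 - 1 / ((Nm π.1 : ℂ) + 1) ^ 2)⁻¹ = ∏' p, h p := by
    let j : {π : Zω // Prime π ∧ (3 : Zω) ∣ (π - 1) ∧ π ∣ r} → P :=
      fun π => ⟨π.1, π.2.1, π.2.2.1⟩
    have hj : Function.Injective j := fun a b e => Subtype.ext (congrArg (fun z => z.1) e)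
    rw [← hj.tprod_eq (f := h)]
    · refine tprod_congr fun π => ?_
      have : (j π).1 ∣ r := π.2.2.2
      simp only [hh, if_pos this, hg, sub_eq_add_neg, j]
    · intro p hp
      exact ⟨⟨p.1, p.2.1, p.2.2, hsupp hp⟩, rfl⟩
  have hR1 : ∏' π : {π : Zω // Prime π ∧ (3 : Zω) ∣ (π - 1)},
          (1 - 1 / ((Nm π.1 : ℂ) + 1) ^ 2) = ∏' p, (1 + g p) := by
    simp only [hg, sub_eq_add_neg]
    rfl
  rw [hR, hR1, ← hgm.tprod_mul hhm]
  simp_rw [← hmul]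
  rw [tprod_one_add (summable_finsetProd_of_summable_norm hfs)]
  -- the left-hand side
  have hex : ∀ d : {d : Zω // Squarefree d ∧ (3 : Zω) ∣ (d - 1) ∧ IsCoprime d r},
      ∃ s : Finset P, ∏ q ∈ s, q.1 = d.1 := fun d => exists_finset d.2.1 d.2.2.1
  choose i hi using hex
  have hinj : Function.Injective i := fun a b e => Subtype.ext (by rw [← hi a, ← hi b, e])
  rw [← hinj.tsum_eq (f := fun s => ∏ p ∈ s, f p)]
  · refine tsum_congr fun d => ?_
    have ht := term_eq hμ (i d)
    rw [hi d] at ht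
    rw [ht]
    refine Finset.prod_congr rfl fun p hp => ?_
    have hnd : ¬ p.1 ∣ r := by
      intro hpr
      have hpd : p.1 ∣ d.1 := by rw [← hi d]; exact dvd_prod_iff.2 hp
      exact p.2.1.not_isUnit (d.2.2.2.isUnit_of_dvd' hpd hpr)
    simp only [hf, if_neg hnd, hg]
  · intro s hs
    have hs' : ∀ p ∈ s, ¬ p.1 ∣ r := by
      intro p hp hpr
      exact Finset.prod_ne_zero_iff.1 hs p hp (if_pos hpr)
    refine ⟨⟨∏ q ∈ s, q.1, prod_squarefree s, pr_prod s, prod_coprime hs'⟩, ?_⟩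
    exact prod_inj (hi _)

end EisAux

open Complex in
/-- for `r ≡ 1 (mod 3)`,
`Σ_{d SF, d ≡ 1 (3), (d,r)=1} μ(d)/(N(d)σ(d)) ∏_{π∣d}(1-N(π)^{-2})⁻¹ Σ_{c∣d} μ(c)/N(c)`
`= ∏_{π ≡ 1 (3)} (1 - 1/(N(π)+1)²) ∏_{π ∣ r} (1 - 1/(N(π)+1)²)⁻¹`. -/
theorem moebius_sigma_sum (μ : Zω → ℤ) (hμ : IsMoebiusZω μ)
    (r : Zω) (hr : (3 : Zω) ∣ (r - 1)) (hr0 : r ≠ 0) :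
    ∑' d : {d : Zω // Squarefree d ∧ (3 : Zω) ∣ (d - 1) ∧ IsCoprime d r},
        (μ d.1 : ℂ) / ((Nm d.1 : ℂ) * sigmaC d.1) *
          (∏' π : {π : Zω // Prime π ∧ (3 : Zω) ∣ (π - 1) ∧ π ∣ d.1},
            (1 - (Nm π.1 : ℂ) ^ (-2 : ℤ))⁻¹) *
          ∑' c : {c : Zω // (3 : Zω) ∣ (c - 1) ∧ c ∣ d.1}, (μ c.1 : ℂ) / (Nm c.1 : ℂ) =
      (∏' π : {π : Zω // Prime π ∧ (3 : Zω) ∣ (π - 1)},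
          (1 - 1 / ((Nm π.1 : ℂ) + 1) ^ 2)) *
        ∏' π : {π : Zω // Prime π ∧ (3 : Zω) ∣ (π - 1) ∧ π ∣ r},
          (1 - 1 / ((Nm π.1 : ℂ) + 1) ^ 2)⁻¹ := by
  exact EisAux.main hμ r hr hr0

end
end
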